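/- Let 𝒯 be a pretriangulated category with all set-indexed coproducts, equipped with a Bousfield localization datum (L, η). Let T be a set of objects of 𝒯 and let τ be the smallest localizing subcategory of 𝒯 containing T. Assume τ is closed under L, i.e., L Y ∈ τ for every Y ∈ τ. Then the smallest localizing subcategory of 𝒯 containing {L Y : Y ∈ T} consists exactly of those objects of τ that are local. -/

import Mathlib

/-!
An object is local exactly when it is isomorphic to some `L Y`, and the local objects form a
localizing subcategory (`isLocalizing_local`): since `η` is natural, a distinguished triangle whose
first two vertices are local is isomorphic to its image under `L`. Hence the local objects of `τ`
form a localizing subcategory containing every `L Y` with `Y ∈ T`, which gives one inclusion.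
Conversely, for any localizing `S` containing these `L Y`, the preimage of `S` under `L` is
localizing (`IsLocalizing.preimage`) and contains `T`, hence contains `τ`; so a local `X ∈ τ`
satisfies `X ≅ L X ∈ S`.
-/

open CategoryTheory Limits Pretriangulated ZeroObject

universe w v u

variable {𝒯 : Type u} [Category.{v} 𝒯] [HasZeroObject 𝒯] [Preadditive 𝒯]
  [HasShift 𝒯 ℤ] [∀ n : ℤ, (shiftFunctor 𝒯 n).Additive] [Pretriangulated 𝒯]
  [HasCoproducts.{w} 𝒯]

/-- A localizing subcategory: a nonempty class of objects, closed under isomorphisms,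
cones, extensions, and all set-indexed coproducts. -/
def IsLocalizing (S : Set 𝒯) : Prop :=
  S.Nonempty ∧
  (∀ ⦃X Y : 𝒯⦄, (X ≅ Y) → X ∈ S → Y ∈ S) ∧
  (∀ T : Triangle 𝒯, (T ∈ distTriang 𝒯) → T.obj₁ ∈ S → T.obj₂ ∈ S → T.obj₃ ∈ S) ∧
  (∀ T : Triangle 𝒯, (T ∈ distTriang 𝒯) → T.obj₁ ∈ S → T.obj₃ ∈ S → T.obj₂ ∈ S) ∧
  (∀ {ι : Type w} (f : ι → 𝒯), (∀ i, f i ∈ S) → (∐ f) ∈ S)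

/-- The smallest localizing subcategory containing a set of objects `T`. -/
def smallestLocalizing (T : Set 𝒯) : Set 𝒯 :=
  {X | ∀ S : Set 𝒯, IsLocalizing.{w} S → T ⊆ S → X ∈ S}

theorem IsLocalizing.zero_mem {S : Set 𝒯} (hS : IsLocalizing.{w} S) : (0 : 𝒯) ∈ S := by
  obtain ⟨⟨X, hX⟩, -, hcone, -, -⟩ := hS
  exact hcone _ (contractible_distinguished X) hX hX

theorem IsLocalizing.inter {S S' : Set 𝒯} (hS : IsLocalizing.{w} S)
    (hS' : IsLocalizing.{w} S') : IsLocalizing.{w} (S ∩ S') := by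
  refine ⟨⟨0, hS.zero_mem, hS'.zero_mem⟩, ?_, ?_, ?_, ?_⟩
  · exact fun X Y e h => ⟨hS.2.1 e h.1, hS'.2.1 e h.2⟩
  · exact fun T hT h₁ h₂ => ⟨hS.2.2.1 T hT h₁.1 h₂.1, hS'.2.2.1 T hT h₁.2 h₂.2⟩
  · exact fun T hT h₁ h₃ => ⟨hS.2.2.2.1 T hT h₁.1 h₃.1, hS'.2.2.2.1 T hT h₁.2 h₃.2⟩
  · exact fun f hf => ⟨hS.2.2.2.2 f fun i => (hf i).1, hS'.2.2.2.2 f fun i => (hf i).2⟩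

theorem subset_smallestLocalizing (T : Set 𝒯) : T ⊆ smallestLocalizing.{w} T :=
  fun _ hX _ _ hTS => hTS hX

theorem isLocalizing_smallestLocalizing (T : Set 𝒯) :
    IsLocalizing.{w} (smallestLocalizing.{w} T) := by
  refine ⟨⟨0, fun S hS _ => hS.zero_mem⟩, ?_, ?_, ?_, ?_⟩
  · exact fun X Y e h S hS hT => hS.2.1 e (h S hS hT)
  · exact fun D hD h₁ h₂ S hS hT => hS.2.2.1 D hD (h₁ S hS hT) (h₂ S hS hT)
  · exact fun D hD h₁ h₃ S hS hT => hS.2.2.2.1 D hD (h₁ S hS hT) (h₃ S hS hT)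
  · exact fun f hf S hS hT => hS.2.2.2.2 f fun i => hf i S hS hT

theorem IsLocalizing.preimage {S : Set 𝒯} (hS : IsLocalizing.{w} S)
    (L : 𝒯 ⥤ 𝒯) [L.CommShift ℤ] [L.IsTriangulated]
    [∀ ι : Type w, PreservesColimitsOfShape (Discrete ι) L] :
    IsLocalizing.{w} {Y | L.obj Y ∈ S} := by
  refine ⟨⟨0, hS.2.1 L.mapZeroObject.symm hS.zero_mem⟩, ?_, ?_, ?_, ?_⟩
  · exact fun X Y e h => hS.2.1 (L.mapIso e) h
  · exact fun D hD h₁ h₂ => hS.2.2.1 _ (L.map_distinguished D hD) h₁ h₂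
  · exact fun D hD h₁ h₃ => hS.2.2.2.1 _ (L.map_distinguished D hD) h₁ h₃
  · exact fun f hf => hS.2.1 (PreservesCoproduct.iso L f).symm (hS.2.2.2.2 _ hf)

/-- No compatibility of `η` with the shift is assumed, so closure under shifts and cones is deduced
from the description of local objects as the objects isomorphic to a value of `L`. -/
theorem isLocalizing_local (L : 𝒯 ⥤ 𝒯) [L.CommShift ℤ] [L.IsTriangulated]
    [∀ ι : Type w, PreservesColimitsOfShape (Discrete ι) L] (η : 𝟭 𝒯 ⟶ L)
    (hLlocal : ∀ X : 𝒯, IsIso (η.app (L.obj X))) :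
    IsLocalizing.{w} {X : 𝒯 | IsIso (η.app X)} := by
  have hiso : ∀ ⦃X Y : 𝒯⦄, (X ≅ Y) → IsIso (η.app X) → IsIso (η.app Y) :=
    fun X Y e h => (NatTrans.isIso_app_iff_of_iso η e).1 h
  have hcone : ∀ D : Triangle 𝒯, (D ∈ distTriang 𝒯) → IsIso (η.app D.obj₁) →
      IsIso (η.app D.obj₂) → IsIso (η.app D.obj₃) := by
    intro D hD h₁ h₂
    -- The isomorphism `η` on the first edge extends to an isomorphism from `D` to `L D`.
    have hLD := L.map_distinguished D hD
    let e₁ : D.obj₁ ≅ L.obj D.obj₁ := asIso (η.app D.obj₁)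
    let e₂ : D.obj₂ ≅ L.obj D.obj₂ := asIso (η.app D.obj₂)
    obtain ⟨e, -, -⟩ := exists_iso_of_arrow_iso D _ hD hLD
      (Arrow.isoMk e₁ e₂ (η.naturality D.mor₁).symm)
    exact hiso (Triangle.π₃.mapIso e).symm (hLlocal D.obj₃)
  refine ⟨⟨_, hLlocal 0⟩, hiso, hcone, ?_, ?_⟩
  · -- The middle vertex is the cone of the map from the desuspension of the third vertex.
    intro D hD h₁ h₃
    have h₃' : IsIso (η.app D.obj₃) := h₃
    refine hcone D.invRotate (inv_rot_of_distTriang D hD) ?_ h₁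
    exact hiso ((L.commShiftIso (-1 : ℤ)).app D.obj₃ ≪≫
      (shiftFunctor 𝒯 (-1 : ℤ)).mapIso (asIso (η.app D.obj₃)).symm) (hLlocal _)
  · intro ι f hf
    have hf' : ∀ i, IsIso (η.app (f i)) := hf
    exact hiso (PreservesCoproduct.iso L f ≪≫
      Sigma.mapIso fun i => (asIso (η.app (f i))).symm) (hLlocal _)


/-- given a Bousfield localization datum `(L, η)` and a set of objects `T`
generating a localizing subcategory `τ` which is closed under `L`, the localizing
subcategory generated by `{L Y : Y ∈ T}` consists exactly of the local objects of `τ`. -/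
theorem stmt6
    -- a Bousfield localization datum: a triangulated endofunctor preserving
    -- set-indexed coproducts, ...
    (L : 𝒯 ⥤ 𝒯) [L.CommShift ℤ] [L.IsTriangulated]
    [∀ ι : Type w, PreservesColimitsOfShape (Discrete ι) L]
    -- ... a natural transformation `η : id → L`, ...
    (η : 𝟭 𝒯 ⟶ L)
    -- ... such that `L X` is local for every `X` (`Z` local means `η_Z` invertible), ...
    (hLlocal : ∀ X : 𝒯, IsIso (η.app (L.obj X)))
    -- ... and for every local `Z` and every `Y`, precomposition with `η_Y` is a bijection
    -- `Hom(L Y, Z) → Hom(Y, Z)`.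
    (huniv : ∀ Z Y : 𝒯, IsIso (η.app Z) →
      Function.Bijective (fun g : L.obj Y ⟶ Z => η.app Y ≫ g))
    -- `T` a set of objects, `τ` the localizing subcategory it generates, closed under `L`:
    (T : Set 𝒯)
    (hclosed : ∀ Y ∈ smallestLocalizing.{w} T, L.obj Y ∈ smallestLocalizing.{w} T) :
    smallestLocalizing.{w} (L.obj '' T) =
      {X | X ∈ smallestLocalizing.{w} T ∧ IsIso (η.app X)} := by
  apply Set.Subset.antisymm
  · intro X hX
    refine hX _ ((isLocalizing_smallestLocalizing T).inter (isLocalizing_local L η hLlocal)) ?_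
    rintro _ ⟨Y, hY, rfl⟩
    exact ⟨hclosed Y (subset_smallestLocalizing T hY), hLlocal Y⟩
  · rintro X ⟨hX, hloc⟩ S hS hTS
    exact hS.2.1 (asIso (η.app X)).symm
      (hX _ (hS.preimage L) fun Y hY => hTS ⟨Y, hY, rfl⟩)
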